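/- Assume f is nonincreasing, continuously differentiable on (0,∞) with locally Lipschitz derivative, all weights φ_b are nonnegative, and p_i ≠ b for all i ∈ {1,…,m}, b ∈ B. Let G = ∇_l H(P) be the lexicographic gradient, let w₁,…,w_m ∈ ℝ² be unit vectors (the directions of the network edges containing the sensors), and define the projected step D ∈ (ℝ²)^m by D_h = ⟨G_h, w_h⟩ w_h. Then there exists δ̄ > 0 such that for all δ ∈ (0, δ̄] the network-constrained gradient-ascent step does not decrease the multi-center function: H(P + δ·D) ≥ H(P); moreover the inequality is strict whenever D ≠ 0. -/

import Mathlib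

open scoped RealInnerProductSpace

/-!
STATEMENT 6: With `f` nonincreasing, continuously differentiable on `(0,∞)` with
locally Lipschitz derivative, nonnegative weights, `p_i ≠ b` for all `i,b`,
`G = ∇_l H(P)` the lexicographic gradient, `w₁,…,w_m` unit vectors (directions of
the network edges) and projected step `D_h = ⟨G_h, w_h⟩ w_h`, there exists
`δ̄ > 0` such that for all `δ ∈ (0, δ̄]` the network-constrained step does not
decrease the multi-center function, `H(P + δ·D) ≥ H(P)`, strictly so if `D ≠ 0`.
-/

noncomputable abbrev E2 : Type := EuclideanSpace ℝ (Fin 2)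

/-!
Freeze the allocation `ι` of barycenters to nearest sensors. Since `f` is nonincreasing, the value
computed with the frozen allocation is a lower bound for the multi-center function, and it is
exact at `P`. It is also differentiable at `P`, where ties between sensors may give the multi-center
function a kink, and its gradient there is the lexicographic gradient `G`. Its derivative along the
projected step is therefore `∑ h, ⟪G h, w h⟫ ^ 2`, which is positive unless the step vanishes.
-/

section LineDerivative

theorem exists_forall_lt_of_hasLineDerivAt_pos {E : Type*} [AddCommGroup E] [Module ℝ E]
    {F : E → ℝ} {F' : ℝ} {x v : E} (hF : HasLineDerivAt ℝ F F' x v) (hF' : 0 < F') :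
    ∃ δbar > (0 : ℝ), ∀ δ, 0 < δ → δ ≤ δbar → F x < F (x + δ • v) := by
  obtain ⟨δbar, hδbar, hslope⟩ := mem_nhdsGT_iff_exists_Ioc_subset.1
    (hF.tendsto_slope_zero_right.eventually_const_lt hF')
  refine ⟨δbar, hδbar, fun δ hδ hδle => ?_⟩
  have hpos : 0 < δ⁻¹ * (F (x + δ • v) - F x) := hslope ⟨hδ, hδle⟩
  exact sub_pos.1 ((mul_pos_iff_of_pos_left (inv_pos.2 hδ)).1 hpos)

variable {V : Type*} [NormedAddCommGroup V] [InnerProductSpace ℝ V]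

theorem hasDerivAt_norm_of_ne_zero {c : ℝ → V} {c' : V} {t : ℝ} (hc : HasDerivAt c c' t)
    (h0 : c t ≠ 0) : HasDerivAt (fun s => ‖c s‖) (⟪c t, c'⟫ / ‖c t‖) t := by
  have hsqrt := hc.norm_sq.sqrt (by simpa using h0)
  simp only [Real.sqrt_sq (norm_nonneg _)] at hsqrt
  rwa [mul_div_mul_left _ _ two_ne_zero] at hsqrt

theorem hasLineDerivAt_comp_norm_sub {f : ℝ → ℝ} {b p : V} (hf : DifferentiableAt ℝ f ‖b - p‖)
    (hp : p ≠ b) (v : V) :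
    HasLineDerivAt ℝ (fun q => f ‖b - q‖) ⟪(deriv f ‖b - p‖ / ‖b - p‖) • (p - b), v⟫ p v := by
  have hline : HasDerivAt (fun t : ℝ => b - (p + t • v)) (-v) 0 := by
    simpa using (((hasDerivAt_id (0 : ℝ)).smul_const v).const_add p).const_sub b
  have hnorm := hasDerivAt_norm_of_ne_zero hline (by simpa [sub_eq_zero] using hp.symm)
  simp only [zero_smul, add_zero] at hnorm
  refine (hf.hasDerivAt.comp_of_eq 0 hnorm (by simp)).congr_deriv ?_
  rw [inner_neg_right, ← inner_neg_left, neg_sub, real_inner_smul_left]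
  ring

end LineDerivative

section MultiCenter

variable {V κ : Type*} [NormedAddCommGroup V]

/-- The multi-center function `H(P)` of the sensor positions `P`: the weighted performance of the
distances from the barycenters in `B` to their nearest sensors. The weight `φ` is a function on the
whole space, of which only the values on `B` matter. -/
noncomputable def multiCenter (f : ℝ → ℝ) (φ : V → ℝ) (B : Finset V) (P : κ → V) : ℝ :=
  ∑ b ∈ B, φ b * f (⨅ i, ‖b - P i‖)

/-- The value of the positions `P` when each barycenter `b` is served by the sensor `ι b`, whether
or not that sensor is nearest to `b`. -/
noncomputable def allocationValue (f : ℝ → ℝ) (φ : V → ℝ) (B : Finset V) (ι : V → κ)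
    (P : κ → V) : ℝ :=
  ∑ b ∈ B, φ b * f ‖b - P (ι b)‖

/-- The gradient of `allocationValue` with respect to the positions, one component per sensor. When
`ι b` is the least index of a sensor nearest to `b`, this is the lexicographic gradient `∇_l H(P)`;
other ways of breaking ties are allowed. -/
noncomputable def allocationGradient [NormedSpace ℝ V] [DecidableEq κ] (f : ℝ → ℝ) (φ : V → ℝ)
    (B : Finset V) (ι : V → κ) (P : κ → V) (h : κ) : V :=
  ∑ b ∈ B with ι b = h, (φ b * deriv f ‖b - P h‖ / ‖b - P h‖) • (P h - b)

variable {f : ℝ → ℝ} {φ : V → ℝ} {B : Finset V} {ι : V → κ} {P : κ → V}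

theorem allocationValue_le_multiCenter (hf : AntitoneOn f (Set.Ici 0)) (hφ : ∀ b ∈ B, 0 ≤ φ b)
    (ι : V → κ) (P : κ → V) : allocationValue f φ B ι P ≤ multiCenter f φ B P := by
  refine Finset.sum_le_sum fun b hb => mul_le_mul_of_nonneg_left ?_ (hφ b hb)
  have hbdd : BddBelow (Set.range fun i => ‖b - P i‖) :=
    ⟨0, Set.forall_mem_range.2 fun _ => norm_nonneg _⟩
  exact hf (Real.iInf_nonneg fun _ => norm_nonneg _) (norm_nonneg _) (ciInf_le hbdd (ι b))

theorem multiCenter_eq_allocationValue (hmin : ∀ b ∈ B, ∀ j, ‖b - P (ι b)‖ ≤ ‖b - P j‖) :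
    multiCenter f φ B P = allocationValue f φ B ι P := by
  refine Finset.sum_congr rfl fun b hb => ?_
  have hleast : IsLeast (Set.range fun i => ‖b - P i‖) ‖b - P (ι b)‖ :=
    ⟨⟨ι b, rfl⟩, Set.forall_mem_range.2 (hmin b hb)⟩
  rw [iInf, hleast.csInf_eq]

variable [InnerProductSpace ℝ V]

theorem sum_inner_pos_of_eq_inner_smul {G w D : κ → V} (hD : ∀ h, D h = ⟪G h, w h⟫ • w h)
    {s : Finset κ} (hs : ∃ h ∈ s, D h ≠ 0) : 0 < ∑ h ∈ s, ⟪G h, D h⟫ := by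
  have hsq (h : κ) : ⟪G h, D h⟫ = ⟪G h, w h⟫ ^ 2 := by
    rw [hD, real_inner_smul_right, sq]
  obtain ⟨h, hmem, hDh⟩ := hs
  have hGw : ⟪G h, w h⟫ ≠ 0 := fun h0 => hDh (by rw [hD, h0, zero_smul])
  simp only [hsq]
  exact Finset.sum_pos' (fun _ _ => sq_nonneg _) ⟨h, hmem, by positivity⟩

variable [DecidableEq κ]

theorem allocationGradient_eq_zero_of_notMem_image {h : κ} (hh : h ∉ B.image ι) :
    allocationGradient f φ B ι P h = 0 := by
  have hcell : B.filter (ι · = h) = ∅ :=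
    Finset.filter_eq_empty_iff.2 fun b hb hbh => hh (Finset.mem_image.2 ⟨b, hb, hbh⟩)
  rw [allocationGradient, hcell, Finset.sum_empty]

theorem sum_inner_allocationGradient (f : ℝ → ℝ) (φ : V → ℝ) (B : Finset V) (ι : V → κ)
    (P D : κ → V) :
    ∑ h ∈ B.image ι, ⟪allocationGradient f φ B ι P h, D h⟫ =
      ∑ b ∈ B, φ b * ⟪(deriv f ‖b - P (ι b)‖ / ‖b - P (ι b)‖) • (P (ι b) - b), D (ι b)⟫ := by
  rw [← Finset.sum_fiberwise_of_maps_to fun b => Finset.mem_image_of_mem ι]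
  refine Finset.sum_congr rfl fun h _ => ?_
  rw [allocationGradient, sum_inner]
  refine Finset.sum_congr rfl fun b hb => ?_
  rw [(Finset.mem_filter.1 hb).2, mul_div_assoc, mul_smul, real_inner_smul_left]

theorem hasLineDerivAt_allocationValue (hf : ∀ b ∈ B, DifferentiableAt ℝ f ‖b - P (ι b)‖)
    (hp : ∀ b ∈ B, P (ι b) ≠ b) (D : κ → V) :
    HasLineDerivAt ℝ (allocationValue f φ B ι)
      (∑ h ∈ B.image ι, ⟪allocationGradient f φ B ι P h, D h⟫) P D := by
  rw [sum_inner_allocationGradient]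
  exact HasDerivAt.fun_sum fun b hb =>
    (hasLineDerivAt_comp_norm_sub (hf b hb) (hp b hb) (D (ι b))).const_mul (φ b)

theorem exists_multiCenter_lt_of_sum_inner_pos (hφ : ∀ b ∈ B, 0 ≤ φ b)
    (hmono : AntitoneOn f (Set.Ici 0)) (hf : ∀ b ∈ B, DifferentiableAt ℝ f ‖b - P (ι b)‖)
    (hp : ∀ b ∈ B, P (ι b) ≠ b) (hmin : ∀ b ∈ B, ∀ j, ‖b - P (ι b)‖ ≤ ‖b - P j‖)
    {D : κ → V} (hD : 0 < ∑ h ∈ B.image ι, ⟪allocationGradient f φ B ι P h, D h⟫) :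
    ∃ δbar > (0 : ℝ), ∀ δ, 0 < δ → δ ≤ δbar →
      multiCenter f φ B P < multiCenter f φ B (P + δ • D) := by
  obtain ⟨δbar, hδbar, hstep⟩ :=
    exists_forall_lt_of_hasLineDerivAt_pos (hasLineDerivAt_allocationValue (φ := φ) hf hp D) hD
  refine ⟨δbar, hδbar, fun δ hδ hδle => ?_⟩
  calc multiCenter f φ B P = allocationValue f φ B ι P := multiCenter_eq_allocationValue hmin
    _ < allocationValue f φ B ι (P + δ • D) := hstep δ hδ hδle
    _ ≤ multiCenter f φ B (P + δ • D) := allocationValue_le_multiCenter hmono hφ ι _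

theorem projected_lex_gradient_ascent_step_general (hφ : ∀ b ∈ B, 0 ≤ φ b)
    (hmono : AntitoneOn f (Set.Ici 0)) (hf : ∀ b ∈ B, DifferentiableAt ℝ f ‖b - P (ι b)‖)
    (hp : ∀ b ∈ B, P (ι b) ≠ b) (hmin : ∀ b ∈ B, ∀ j, ‖b - P (ι b)‖ ≤ ‖b - P j‖)
    {w D : κ → V} (hD : ∀ h, D h = ⟪allocationGradient f φ B ι P h, w h⟫ • w h) :
    ∃ δbar > (0 : ℝ), ∀ δ, 0 < δ → δ ≤ δbar →
      multiCenter f φ B P ≤ multiCenter f φ B (P + δ • D) ∧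
      (D ≠ 0 → multiCenter f φ B P < multiCenter f φ B (P + δ • D)) := by
  by_cases hD0 : D = 0
  · exact ⟨1, one_pos, fun δ _ _ => ⟨by rw [hD0, smul_zero, add_zero], fun h => absurd hD0 h⟩⟩
  · obtain ⟨h, hDh⟩ := Function.ne_iff.1 hD0
    have hmem : h ∈ B.image ι := by
      contrapose! hDh
      rw [hD, allocationGradient_eq_zero_of_notMem_image hDh, inner_zero_left, zero_smul,
        Pi.zero_apply]
    obtain ⟨δbar, hδbar, hlt⟩ := exists_multiCenter_lt_of_sum_inner_pos hφ hmono hf hp hmin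
      (sum_inner_pos_of_eq_inner_smul hD ⟨h, hmem, hDh⟩)
    exact ⟨δbar, hδbar, fun δ hδ hδle => ⟨(hlt δ hδ hδle).le, fun _ => hlt δ hδ hδle⟩⟩

end MultiCenter

theorem projected_lex_gradient_ascent_step
    (B : Finset E2) (hB : B.Nonempty)
    (φ : E2 → ℝ) (hφ : ∀ b ∈ B, 0 ≤ φ b)
    (f : ℝ → ℝ)
    (hmono : ∀ x y : ℝ, 0 ≤ x → x ≤ y → f y ≤ f x)
    (hf : ContDiffOn ℝ 1 f (Set.Ioi 0))
    (hf' : ∀ x ∈ Set.Ioi (0 : ℝ), ∃ s ∈ nhds x, ∃ K : NNReal,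
      LipschitzOnWith K (deriv f) s)
    (m : ℕ) (hm : 0 < m) (P : Fin m → E2)
    (hp : ∀ i, ∀ b ∈ B, P i ≠ b)
    (ι : E2 → Fin m)
    (hmin : ∀ b ∈ B, ∀ j, ‖b - P (ι b)‖ ≤ ‖b - P j‖)
    (hleast : ∀ b ∈ B, ∀ j, (∀ k, ‖b - P j‖ ≤ ‖b - P k‖) → ι b ≤ j)
    (G : Fin m → E2)
    (hG : ∀ h, G h = ∑ b ∈ B.filter (fun b => ι b = h),
        (φ b * deriv f ‖b - P h‖ / ‖b - P h‖) • (P h - b))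
    (w : Fin m → E2) (hw : ∀ h, ‖w h‖ = 1)
    (D : Fin m → E2) (hD : ∀ h, D h = ⟪G h, w h⟫ • w h) :
    ∃ δbar > (0 : ℝ), ∀ δ : ℝ, 0 < δ → δ ≤ δbar →
      (∑ b ∈ B, φ b * f (⨅ i, ‖b - (P i + δ • D i)‖) ≥
        ∑ b ∈ B, φ b * f (⨅ i, ‖b - P i‖)) ∧
      (D ≠ 0 →
        ∑ b ∈ B, φ b * f (⨅ i, ‖b - (P i + δ • D i)‖) >
          ∑ b ∈ B, φ b * f (⨅ i, ‖b - P i‖)) := by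
  have hdiff : ∀ b ∈ B, DifferentiableAt ℝ f ‖b - P (ι b)‖ := fun b hb =>
    (hf.differentiableOn one_ne_zero).differentiableAt
      (Ioi_mem_nhds (norm_sub_pos_iff.2 (hp (ι b) b hb).symm))
  exact projected_lex_gradient_ascent_step_general hφ (fun x hx y _ hxy => hmono x y hx hxy) hdiff
    (fun b hb => hp (ι b) b hb) hmin (fun h => by rw [hD, hG, allocationGradient])
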